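/- For every finite subset P* ⊆ Φ and every function f : P* → ℂ, there exist unique coefficients (c_{p'})_{p' ∈ P*} ∈ ℂ^{P*} such that Σ_{p' ∈ P*} c_{p'} φ_{p'}(p) = f(p) for all p ∈ P*; i.e., the piecewise-linear interpolant of f in the span of the hierarchical hat functions {φ_{p'}}_{p' ∈ P*} exists and is unique. -/

import Mathlib

/-- The one-dimensional sparse grid level sets: `Γ(n) = ∅` for `n < 0`, `Γ(0) = {0}`,
and `Γ(n) = {2^{1-n} j : j ∈ ℤ, |j| ≤ 2^{n-1}}` for `n ≥ 1`. -/
def sgLevel (n : ℤ) : Set ℝ :=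
  if n < 0 then ∅
  else if n = 0 then {0}
  else {x | ∃ j : ℤ, |j| ≤ 2 ^ (n - 1).toNat ∧ x = (2 : ℝ) ^ (1 - n) * (j : ℝ)}

/-- The tensor grid `Γ(𝐧) = Γ(n₁) × ⋯ × Γ(n_d)`. -/
def tensorGrid (d : ℕ) (nv : Fin d → ℤ) : Set (Fin d → ℝ) :=
  {x | ∀ k, x k ∈ sgLevel (nv k)}

/-- `Φ = ⋃_{𝐧 ∈ ℤ^d} Γ(𝐧)`. -/
def sgPoints (d : ℕ) : Set (Fin d → ℝ) :=
  ⋃ nv : Fin d → ℤ, tensorGrid d nv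

/-- The level of a coordinate: `lvl(t) = min {n ≥ 0 : t ∈ Γ(n)}`. -/
noncomputable def lvl (t : ℝ) : ℕ :=
  sInf {n : ℕ | t ∈ sgLevel (n : ℤ)}

/-- One-dimensional hat functions: `φ̂_{p,0} ≡ 1`, and for `n ≥ 1`,
`φ̂_{p,n}(x) = max(0, 1 - 2^{n-1}|x - p|)`. -/
def hat1 (p : ℝ) (n : ℕ) (x : ℝ) : ℝ :=
  if n = 0 then 1 else max 0 (1 - 2 ^ (n - 1) * |x - p|)

/-- The hierarchical hat function of `p ∈ Φ`: `φ_p(x) = Π_k φ̂_{p_k, n_k(p)}(x_k)`. -/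
noncomputable def hierHat (d : ℕ) (p x : Fin d → ℝ) : ℝ :=
  ∏ k, hat1 (p k) (lvl (p k)) (x k)

/-- Multiplying a point of `Γ(m)` by `2^{n-1}`, `n ≥ m`, gives an integer. -/
lemma exists_int_of_mem_sgLevel {t : ℝ} {m n : ℕ} (hmn : m ≤ n) (ht : t ∈ sgLevel (m : ℤ)) :
    ∃ j : ℤ, 2 ^ (n - 1) * t = j := by
  rcases m with _ | m
  · have h0 : t = 0 := by simpa [sgLevel] using ht
    exact ⟨0, by simp [h0]⟩
  · have hneg : ¬ ((m + 1 : ℕ) : ℤ) < 0 := by lia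
    have hne : ((m + 1 : ℕ) : ℤ) ≠ 0 := by lia
    rw [sgLevel, if_neg hneg, if_neg hne] at ht
    obtain ⟨j, -, rfl⟩ := ht
    refine ⟨2 ^ (n - 1 - m) * j, ?_⟩
    have hexp : (1 : ℤ) - ((m + 1 : ℕ) : ℤ) = -(m : ℤ) := by lia
    have hpow : (2 : ℝ) ^ (n - 1) = 2 ^ (n - 1 - m) * 2 ^ m := by
      rw [← pow_add]
      congr 1
      lia
    rw [hexp, zpow_neg, zpow_natCast, hpow]
    push_cast
    field_simp

lemma mem_sgLevel_lvl {t : ℝ} (ht : ∃ n : ℕ, t ∈ sgLevel (n : ℤ)) : t ∈ sgLevel (lvl t : ℤ) :=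
  Nat.sInf_mem (s := {n : ℕ | t ∈ sgLevel (n : ℤ)}) ht

lemma exists_nat_mem_sgLevel {d : ℕ} {p : Fin d → ℝ} (hp : p ∈ sgPoints d) (k : Fin d) :
    ∃ n : ℕ, p k ∈ sgLevel (n : ℤ) := by
  obtain ⟨nv, hnv⟩ := Set.mem_iUnion.1 hp
  have hk : p k ∈ sgLevel (nv k) := hnv k
  have hnonneg : 0 ≤ nv k := by
    by_contra hneg
    simp [sgLevel, not_le.1 hneg] at hk
  exact ⟨(nv k).toNat, by rwa [Int.toNat_of_nonneg hnonneg]⟩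

lemma hat1_self (p : ℝ) (n : ℕ) : hat1 p n p = 1 := by
  simp [hat1]

/-- The hat function of `s` vanishes at all other grid points of no larger level. -/
lemma hat1_lvl_eq_zero {s t : ℝ} (hs : ∃ n : ℕ, s ∈ sgLevel (n : ℤ))
    (ht : ∃ n : ℕ, t ∈ sgLevel (n : ℤ)) (hle : lvl t ≤ lvl s) (hne : t ≠ s) :
    hat1 s (lvl s) t = 0 := by
  have hs' := mem_sgLevel_lvl hs
  have ht' := mem_sgLevel_lvl ht
  by_cases h0 : lvl s = 0
  · rw [h0] at hs'
    rw [Nat.le_zero.1 (hle.trans_eq h0)] at ht'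
    simp only [sgLevel, Nat.cast_zero, lt_self_iff_false, if_false, if_true,
      Set.mem_singleton_iff] at hs' ht'
    exact absurd (ht'.trans hs'.symm) hne
  · obtain ⟨i, hi⟩ := exists_int_of_mem_sgLevel le_rfl hs'
    obtain ⟨j, hj⟩ := exists_int_of_mem_sgLevel hle ht'
    have hpos : (0 : ℝ) < 2 ^ (lvl s - 1) := by positivity
    have hji : j ≠ i := by
      rintro rfl
      exact hne (mul_left_cancel₀ hpos.ne' (hj.trans hi.symm))
    have hdist : 2 ^ (lvl s - 1) * |t - s| = |((j - i : ℤ) : ℝ)| := by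
      rw [← abs_of_pos hpos, ← abs_mul, mul_sub, hi, hj, Int.cast_sub]
    have hone : (1 : ℝ) ≤ |((j - i : ℤ) : ℝ)| := by
      exact_mod_cast Int.one_le_abs (sub_ne_zero.2 hji)
    rw [hat1, if_neg h0, hdist]
    exact max_eq_left (by linarith)

lemma hierHat_self (d : ℕ) (p : Fin d → ℝ) : hierHat d p p = 1 := by
  simp [hierHat, hat1_self]

/-- A hierarchical hat function is nonzero only at its own point and at points of strictly
larger total level. -/
lemma sum_lvl_lt_of_hierHat_ne_zero {d : ℕ} {p q : Fin d → ℝ} (hp : p ∈ sgPoints d)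
    (hq : q ∈ sgPoints d) (hne : q ≠ p) (h : hierHat d q p ≠ 0) :
    ∑ k, lvl (q k) < ∑ k, lvl (p k) := by
  have hlt : ∀ k, q k ≠ p k → lvl (q k) < lvl (p k) := fun k hk => by
    by_contra hle
    exact Finset.prod_ne_zero_iff.1 h k (Finset.mem_univ k)
      (hat1_lvl_eq_zero (exists_nat_mem_sgLevel hq k) (exists_nat_mem_sgLevel hp k)
        (not_lt.1 hle) hk.symm)
  obtain ⟨k, hk⟩ := Function.ne_iff.1 hne
  refine Finset.sum_lt_sum (fun i _ => ?_) ⟨k, Finset.mem_univ k, hlt k hk⟩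
  by_cases hi : q i = p i
  · rw [hi]
  · exact (hlt i hi).le

/-- The interpolation matrix of the hierarchical hat functions has trivial kernel. -/
lemma eq_zero_of_sum_hierHat_eq_zero {d : ℕ} {P : Finset (Fin d → ℝ)} (hP : ↑P ⊆ sgPoints d)
    {c : {x // x ∈ P} → ℂ}
    (hc : ∀ p : {x // x ∈ P}, ∑ q, c q * (hierHat d (q : Fin d → ℝ) p : ℂ) = 0) : c = 0 := by
  have key : ∀ (N : ℕ) (p : {x // x ∈ P}), ∑ k, lvl (p.1 k) = N → c p = 0 := by
    intro N
    induction N using Nat.strong_induction_on with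
    | _ N ih =>
      intro p hpN
      have hsum := hc p
      rw [Finset.sum_eq_single p] at hsum
      · simpa [hierHat_self] using hsum
      · intro q _ hqp
        by_cases h : hierHat d q.1 p.1 = 0
        · simp [h]
        · have hlt := sum_lvl_lt_of_hierHat_ne_zero (hP p.2) (hP q.2)
            (fun e => hqp (Subtype.ext e)) h
          rw [ih _ (hpN ▸ hlt) q rfl, zero_mul]
      · simp
  exact funext fun p => key _ p rfl

/-- For every finite subset `P* ⊆ Φ` and every function `f : P* → ℂ`, there exist unique
coefficients `(c_{p'})_{p' ∈ P*}` such that `Σ_{p' ∈ P*} c_{p'} φ_{p'}(p) = f(p)` for all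
`p ∈ P*`: the piecewise-linear interpolant in the span of the hierarchical hat functions
exists and is unique. -/
theorem hierHat_interpolation_exists_unique (d : ℕ) (P : Finset (Fin d → ℝ))
    (hP : ↑P ⊆ sgPoints d) (f : (Fin d → ℝ) → ℂ) :
    ∃! c : {x // x ∈ P} → ℂ,
      ∀ p ∈ P, ∑ p' ∈ P.attach, c p' * (hierHat d (p' : Fin d → ℝ) p : ℂ) = f p := by
  let A : Matrix {x // x ∈ P} {x // x ∈ P} ℂ := fun p q => (hierHat d q.1 p.1 : ℂ)
  have hA : ∀ c p, A.mulVecLin c p = ∑ q, c q * (hierHat d q.1 p.1 : ℂ) := fun c p =>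
    Finset.sum_congr rfl fun _ _ => mul_comm _ _
  have hinj : Function.Injective A.mulVecLin := by
    refine (injective_iff_map_eq_zero _).2 fun c hc => eq_zero_of_sum_hierHat_eq_zero hP fun p => ?_
    rw [← hA, hc, Pi.zero_apply]
  have hbij : Function.Bijective A.mulVecLin :=
    ⟨hinj, LinearMap.injective_iff_surjective.1 hinj⟩
  obtain ⟨c, hc, huniq⟩ := hbij.existsUnique fun p => f p.1
  refine ⟨c, fun p hp => ?_, fun c' hc' => huniq c' (funext fun p => ?_)⟩
  · exact (hA c ⟨p, hp⟩).symm.trans (congrFun hc ⟨p, hp⟩)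
  · exact (hA c' p).trans (hc' p.1 p.2)
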